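/- arXiv:1809.05460 — 3 statements merged into one kernel-verified Lean document; each statement's English description precedes it below -/
import Mathlib

section
/- Let G ⊆ UT(n,ℝ) be a real unipotent group and let α ∈ G^♯. Then there exist g ∈ G and a real algebraic subgroup H of G such that the coset gH is near α, and gH ⊆ g'H' for every g' ∈ G and every real algebraic subgroup H' of G such that the coset g'H' is near α. In other words, among all cosets of real algebraic subgroups of G that are near α, there is a smallest one with respect to inclusion. -/
open Pointwise Filter

noncomputable section

/-- Square matrices of size `n` over `R`. -/
abbrev Mat (n : ℕ) (R : Type) : Type := Matrix (Fin n) (Fin n) R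

/-- The set `UT(n,ℝ)` of upper triangular matrices with `1`s on the diagonal. -/
def UTset (n : ℕ) : Set (Mat n ℝ) :=
  {A | (∀ i, A i i = 1) ∧ ∀ i j : Fin n, (j : ℕ) < (i : ℕ) → A i j = 0}

/-- The entries of a matrix, as a point of `ℝ^(n²)`. -/
def matEval {n : ℕ} (A : Mat n ℝ) : Fin n × Fin n → ℝ := fun ij => A ij.1 ij.2

/-- A real unipotent group: a subgroup of `UT(n,ℝ)` which is the common zero set in
`UT(n,ℝ)` of a family of real polynomials in the matrix entries. -/
def IsRealUnipotentGroup (n : ℕ) (G : Set (Mat n ℝ)) : Prop :=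
  (∃ S : Set (MvPolynomial (Fin n × Fin n) ℝ),
      G = {A | A ∈ UTset n ∧ ∀ p ∈ S, MvPolynomial.eval (matEval A) p = 0}) ∧
    (1 : Mat n ℝ) ∈ G ∧ (∀ a ∈ G, ∀ b ∈ G, a * b ∈ G) ∧ ∀ a ∈ G, a⁻¹ ∈ G

/-- A real algebraic subgroup of a real unipotent group `G`. -/
def IsRealAlgSubgroup (n : ℕ) (G H : Set (Mat n ℝ)) : Prop :=
  H ⊆ G ∧ IsRealUnipotentGroup n H

/-- `N` is a normal subgroup-set of `G`. -/
def IsNormalIn (n : ℕ) (G N : Set (Mat n ℝ)) : Prop :=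
  ∀ g ∈ G, ∀ x ∈ N, g * x * g⁻¹ ∈ N

/-- `Γ` is a lattice in `G`: a discrete subgroup which is cocompact, i.e. there is a
compact `K ⊆ G` with `K·Γ = G` (equivalently, `G/Γ` is compact). -/
def IsLatticeIn (n : ℕ) (G Γ : Set (Mat n ℝ)) : Prop :=
  Γ ⊆ G ∧ (1 : Mat n ℝ) ∈ Γ ∧ (∀ a ∈ Γ, ∀ b ∈ Γ, a * b ∈ Γ) ∧ (∀ a ∈ Γ, a⁻¹ ∈ Γ) ∧
    DiscreteTopology ↥Γ ∧
    ∃ K : Set (Mat n ℝ), K ⊆ G ∧ IsCompact K ∧ ∀ g ∈ G, ∃ k ∈ K, ∃ γ ∈ Γ, g = k * γ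

/-- `H` is `Γ`-rational: `Γ ∩ H` is a lattice in `H`. -/
def IsRationalFor (n : ℕ) (Γ H : Set (Mat n ℝ)) : Prop :=
  IsLatticeIn n H (Γ ∩ H)

/-- The hyperreal matrix represented by a sequence of real matrices. -/
def matOfSeq (n : ℕ) (u : ℕ → Mat n ℝ) : Mat n Hyperreal :=
  Matrix.of fun i j => Hyperreal.ofSeq fun k => u k i j

/-- The nonstandard extension `S^♯` of a set `S` of real matrices: hyperreal matrices
represented by sequences landing in `S` on a set of indices in the ultrafilter. -/
def matSharp (n : ℕ) (S : Set (Mat n ℝ)) : Set (Mat n Hyperreal) :=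
  {A | ∃ u : ℕ → Mat n ℝ, (∀ᶠ k in hyperfilter ℕ, u k ∈ S) ∧ A = matOfSeq n u}

/-- The canonical embedding of real matrices into hyperreal matrices. -/
def matCast {n : ℕ} (A : Mat n ℝ) : Mat n Hyperreal :=
  Matrix.of fun i j => (A i j : Hyperreal)

/-- `μ(G)`: elements of `G^♯` all of whose entries are infinitesimally close to the
corresponding entries of the identity matrix. -/
def muSet (n : ℕ) (G : Set (Mat n ℝ)) : Set (Mat n Hyperreal) :=
  {A | A ∈ matSharp n G ∧ ∀ i j, Hyperreal.Infinitesimal (A i j - (1 : Mat n Hyperreal) i j)}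

/-- The coset `gH` is near `α`, i.e. `α ∈ μ(G)·g·H^♯`. -/
def NearCoset (n : ℕ) (G : Set (Mat n ℝ)) (g : Mat n ℝ) (H : Set (Mat n ℝ))
    (α : Mat n Hyperreal) : Prop :=
  α ∈ muSet n G * ({matCast g} * matSharp n H)

/-- The set of standard parts of the finite elements of a set of hyperreal matrices. -/
def matStSet (n : ℕ) (A : Set (Mat n Hyperreal)) : Set (Mat n ℝ) :=
  {B | ∃ a ∈ A, ∀ i j, Hyperreal.IsSt (a i j) (B i j)}

/-- A polynomial map `ℝ^d → Mat n ℝ`. -/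
def IsPolyMapVec (d n : ℕ) (F : (Fin d → ℝ) → Mat n ℝ) : Prop :=
  ∃ P : Fin n → Fin n → MvPolynomial (Fin d) ℝ,
    ∀ x i j, F x i j = MvPolynomial.eval x (P i j)

/-- The inclusion `ℝ →+* ℝ*` as a ring homomorphism. -/
def realHyperRingHom : ℝ →+* Hyperreal where
  toFun r := (r : Hyperreal)
  map_one' := Hyperreal.coe_one
  map_mul' := Hyperreal.coe_mul
  map_zero' := Hyperreal.coe_zero
  map_add' := Hyperreal.coe_add

/-- A semialgebraic subset of matrix space: a finite union of sets defined by finitely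
many polynomial equations and finitely many strict polynomial inequalities. -/
def IsSemialgebraic (n : ℕ) (S : Set (Mat n ℝ)) : Prop :=
  ∃ (k : ℕ) (P Q : Fin k → Finset (MvPolynomial (Fin n × Fin n) ℝ)),
    S = ⋃ t : Fin k, {A | (∀ p ∈ P t, MvPolynomial.eval (matEval A) p = 0) ∧
      ∀ q ∈ Q t, 0 < MvPolynomial.eval (matEval A) q}


theorem ut_det {n : ℕ} {A : Mat n ℝ} (hA : A ∈ UTset n) : A.det = 1 := by
  rw [Matrix.det_of_isUpperTriangular (fun i j hij => hA.2 i j hij)]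
  simp [hA.1]

theorem ut_unit {n : ℕ} {A : Mat n ℝ} (hA : A ∈ UTset n) : IsUnit A.det := by
  rw [ut_det hA]; exact isUnit_one

theorem ut_inv_eq {n : ℕ} {A : Mat n ℝ} (hA : A ∈ UTset n) : A⁻¹ = A.adjugate := by
  rw [Matrix.inv_def, ut_det hA]; simp

theorem ut_mul_inv {n : ℕ} {A : Mat n ℝ} (hA : A ∈ UTset n) : A * A⁻¹ = 1 :=
  Matrix.mul_nonsing_inv A (ut_unit hA)

theorem ut_inv_mul {n : ℕ} {A : Mat n ℝ} (hA : A ∈ UTset n) : A⁻¹ * A = 1 :=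
  Matrix.nonsing_inv_mul A (ut_unit hA)

theorem rug_ut {n : ℕ} {H : Set (Mat n ℝ)} (hH : IsRealUnipotentGroup n H) {A : Mat n ℝ}
    (hA : A ∈ H) : A ∈ UTset n := by
  obtain ⟨⟨S, rfl⟩, -⟩ := hH
  exact hA.1

/-- Conjugation-type formula: if `X` vanishes strictly below-left of `(i,j)`, then the `(i,j)`
entry is unchanged by left and right unipotent multiplication. -/
theorem ut_entry {n : ℕ} {A X B : Mat n ℝ} (hA : A ∈ UTset n) (hB : B ∈ UTset n) (i j : Fin n)
    (hX : ∀ p q : Fin n, i ≤ p → q ≤ j → (p, q) ≠ (i, j) → X p q = 0) :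
    (A * X * B) i j = X i j := by
  rw [Matrix.mul_apply, Finset.sum_eq_single j]
  · rw [hB.1, mul_one, Matrix.mul_apply, Finset.sum_eq_single i]
    · rw [hA.1, one_mul]
    · intro r _ hr
      rcases lt_or_ge r i with h | h
      · rw [hA.2 i r h, zero_mul]
      · rw [hX r j h le_rfl (by simp [hr]), mul_zero]
    · simp
  · intro s _ hs
    rcases lt_or_ge j s with h | h
    · rw [hB.2 s j h, mul_zero]
    · rw [Matrix.mul_apply, Finset.sum_eq_zero, zero_mul]
      intro r _
      rcases lt_or_ge r i with h' | h'
      · rw [hA.2 i r h', zero_mul]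
      · rw [hX r s h' h (by simp [hs]), mul_zero]
  · simp

theorem poly_zero_of_nat (p : Polynomial ℝ) (h : ∀ k : ℕ, p.eval (k : ℝ) = 0) : p = 0 := by
  apply Polynomial.eq_zero_of_infinite_isRoot
  apply Set.infinite_of_injective_forall_mem (f := fun k : ℕ => (k : ℝ)) Nat.cast_injective
  intro k
  exact h k

theorem ut_pow_poly {n : ℕ} {u : Mat n ℝ} (hu : u ∈ UTset n) :
    ∃ P : Fin n → Fin n → Polynomial ℝ, ∀ (k : ℕ) (p q : Fin n),
      (u ^ k) p q = (P p q).eval (k : ℝ) := by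
  set N : Mat n ℝ := u - 1 with hN
  have hnil : N ^ n = 0 := by
    have hup : N.BlockTriangular id := by
      intro i j hij
      have : i ≠ j := ne_of_gt hij
      simp [hN, hu.2 i j hij, Matrix.one_apply, this]
    have hc : N.charpoly = Polynomial.X ^ n := by
      rw [Matrix.charpoly_of_isUpperTriangular _ hup]
      simp [hN, hu.1]
    have := Matrix.aeval_self_charpoly N
    rw [hc] at this
    simpa using this
  refine ⟨fun p q => ∑ j ∈ Finset.range n,
    Polynomial.C ((N ^ j) p q / (j.factorial : ℝ)) * descPochhammer ℝ j, ?_⟩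
  intro k p q
  have h1 : u ^ k = ∑ j ∈ Finset.range (k + n + 1), (k.choose j : ℝ) • N ^ j := by
    have : u = N + 1 := by simp [hN]
    rw [this, (Commute.one_right N).add_pow]
    rw [Finset.sum_subset (Finset.range_mono (show k + 1 ≤ k + n + 1 by omega))]
    · refine Finset.sum_congr rfl fun j _ => ?_
      simp only [one_pow, mul_one]
      rw [← nsmul_eq_mul', Nat.cast_smul_eq_nsmul]
    · intro j _ hj
      have : k.choose j = 0 := Nat.choose_eq_zero_of_lt (by simpa using hj)
      simp [this]
  have h2 : u ^ k = ∑ j ∈ Finset.range n, (k.choose j : ℝ) • N ^ j := by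
    rw [h1]
    symm
    apply Finset.sum_subset (Finset.range_mono (by omega))
    intro j _ hj
    have : N ^ j = 0 := pow_eq_zero_of_le (by simpa using hj) hnil
    simp [this]
  rw [h2, Matrix.sum_apply, Polynomial.eval_finsetSum]
  refine Finset.sum_congr rfl fun j _ => ?_
  rw [Polynomial.eval_mul, Polynomial.eval_C, Nat.cast_choose_eq_descPochhammer_div,
    Matrix.smul_apply, smul_eq_mul]
  ring

theorem rug_pow {n : ℕ} {H : Set (Mat n ℝ)} (hH : IsRealUnipotentGroup n H) {u : Mat n ℝ}
    (hu : u ∈ H) (k : ℕ) : u ^ k ∈ H := by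
  induction k with
  | zero => simpa using hH.2.1
  | succ k ih => rw [pow_succ]; exact hH.2.2.1 _ ih _ hu

/-- Real algebraic subgroups are closed under the polynomial extension of powers. -/
theorem rug_path {n : ℕ} {H : Set (Mat n ℝ)} (hH : IsRealUnipotentGroup n H) {u : Mat n ℝ}
    (hu : u ∈ H) (P : Fin n → Fin n → Polynomial ℝ)
    (hP : ∀ (k : ℕ) (p q : Fin n), (u ^ k) p q = (P p q).eval (k : ℝ)) (t : ℝ) :
    (Matrix.of fun p q => (P p q).eval t : Mat n ℝ) ∈ H := by
  have hpow := rug_pow hH hu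
  obtain ⟨⟨S, rfl⟩, -⟩ := hH
  refine ⟨⟨fun i => ?_, fun i j hij => ?_⟩, fun f hf => ?_⟩
  · have : P i i - 1 = 0 := poly_zero_of_nat _ fun k => by
      rw [Polynomial.eval_sub, ← hP, (hpow k).1.1]; simp
    have : P i i = 1 := by linear_combination this
    simp [this]
  · have : P i j = 0 := poly_zero_of_nat _ fun k => by
      rw [← hP, (hpow k).1.2 i j hij]
    simp [this]
  · have key : ∀ t : ℝ, MvPolynomial.eval
        (matEval (Matrix.of fun p q => (P p q).eval t : Mat n ℝ)) f =
        (MvPolynomial.aeval (fun ij : Fin n × Fin n => P ij.1 ij.2) f).eval t := by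
      intro t
      rw [← Polynomial.coe_evalRingHom, MvPolynomial.aeval_def, MvPolynomial.hom_eval₂]
      rw [MvPolynomial.eval, MvPolynomial.coe_eval₂Hom]
      congr 1
      ext; simp
    rw [key]
    have : MvPolynomial.aeval (fun ij : Fin n × Fin n => P ij.1 ij.2) f = 0 := by
      apply poly_zero_of_nat
      intro k
      rw [← key]
      convert (hpow k).2 f hf using 3
      ext p
      exact (hP k _ _).symm
    simp [this]

theorem rug_closed {n : ℕ} {H : Set (Mat n ℝ)} (hH : IsRealUnipotentGroup n H) :
    IsClosed H := by
  obtain ⟨⟨S, rfl⟩, -⟩ := hH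
  have he : Continuous (matEval : Mat n ℝ → _) :=
    continuous_pi fun ij => (continuous_id.matrix_elem ij.1 ij.2)
  have h1 : IsClosed (UTset n) := by
    simp only [UTset, Set.ofPred_and, Set.ofPred_forall]
    refine IsClosed.inter ?_ ?_
    · exact isClosed_iInter fun i => isClosed_eq (continuous_id.matrix_elem i i) continuous_const
    · exact isClosed_iInter fun i => isClosed_iInter fun j => isClosed_iInter fun _ =>
        isClosed_eq (continuous_id.matrix_elem i j) continuous_const
  have h2 : IsClosed {A : Mat n ℝ | ∀ p ∈ S, MvPolynomial.eval (matEval A) p = 0} := by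
    simp only [Set.ofPred_forall]
    exact isClosed_iInter fun p => isClosed_iInter fun _ =>
      isClosed_eq ((MvPolynomial.continuous_eval p).comp he) continuous_const
  exact h1.inter h2

theorem rug_inter {n : ℕ} {H K : Set (Mat n ℝ)} (hH : IsRealUnipotentGroup n H)
    (hK : IsRealUnipotentGroup n K) : IsRealUnipotentGroup n (H ∩ K) := by
  obtain ⟨⟨S, hS⟩, a1, a2, a3⟩ := hH
  obtain ⟨⟨T, hT⟩, b1, b2, b3⟩ := hK
  refine ⟨⟨S ∪ T, ?_⟩, ⟨a1, b1⟩, fun a ha b hb => ⟨a2 a ha.1 b hb.1, b2 a ha.2 b hb.2⟩,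
    fun a ha => ⟨a3 a ha.1, b3 a ha.2⟩⟩
  rw [hS, hT]
  ext A
  simp only [Set.mem_inter_iff, Set.mem_ofPred_eq, Set.mem_union]
  constructor
  · rintro ⟨⟨h1, h2⟩, -, h3⟩
    exact ⟨h1, fun p hp => hp.elim (h2 p) (h3 p)⟩
  · rintro ⟨h1, h2⟩
    exact ⟨⟨h1, fun p hp => h2 p (Or.inl hp)⟩, h1, fun p hp => h2 p (Or.inr hp)⟩

/-- A rank on matrix positions, increasing up and to the right. -/
def posRank {n : ℕ} (p q : Fin n) : ℕ := (finProdFinEquiv (Fin.rev p, q) : ℕ)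

theorem posRank_inj {n : ℕ} {p q i j : Fin n} (h : posRank p q = posRank i j) :
    (p, q) = (i, j) := by
  have := finProdFinEquiv.injective (Fin.ext h)
  simpa using this

theorem posRank_mono {n : ℕ} {p q i j : Fin n} (h : i ≤ p) (h' : q ≤ j) :
    posRank p q ≤ posRank i j := by
  simp only [posRank, finProdFinEquiv_apply_val]
  have h1 : (Fin.rev p : ℕ) ≤ Fin.rev i := by exact_mod_cast Fin.rev_le_rev.mpr h
  have h2 : (q : ℕ) ≤ j := h'
  gcongr

theorem ut_mul_diff {n : ℕ} {A A' B B' : Mat n ℝ} (hA' : A' ∈ UTset n)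
    (hB : B ∈ UTset n) (i j : Fin n)
    (h : ∀ p q : Fin n, i ≤ p → q ≤ j → (p, q) ≠ (i, j) → A p q = B p q)
    (h' : ∀ p q : Fin n, i ≤ p → q ≤ j → (p, q) ≠ (i, j) → A' p q = B' p q) :
    (A * A') i j - (B * B') i j = (A i j - B i j) + (A' i j - B' i j) := by
  have h1 : (1 : Mat n ℝ) ∈ UTset n :=
    ⟨fun i => by simp, fun i j hij => Matrix.one_apply_ne (Fin.ne_of_gt hij)⟩
  have e : A * A' - B * B' = 1 * (A - B) * A' + B * (A' - B') * 1 := by noncomm_ring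
  rw [← Matrix.sub_apply, e, Matrix.add_apply, ut_entry h1 hA' i j, ut_entry hB h1 i j]
  · simp
  · intro p q hp hq hpq
    simp [h' p q hp hq hpq]
  · intro p q hp hq hpq
    simp [h p q hp hq hpq]

theorem below_trans {n : ℕ} {i j p q r s : Fin n} (hp : i ≤ p) (hq : q ≤ j)
    (hpq : (p, q) ≠ (i, j)) (hr : p ≤ r) (hs : s ≤ q) : (r, s) ≠ (i, j) := by
  rintro h
  obtain ⟨rfl, rfl⟩ := Prod.mk.inj h
  exact hpq (by rw [le_antisymm hr hp, le_antisymm hq hs])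

theorem ut_pow_agree {n : ℕ} {H1 H2 : Set (Mat n ℝ)} (hH1 : IsRealUnipotentGroup n H1)
    (hH2 : IsRealUnipotentGroup n H2) {u w : Mat n ℝ} (hu : u ∈ H1) (hw : w ∈ H2)
    (i j : Fin n)
    (hX : ∀ p q : Fin n, i ≤ p → q ≤ j → (p, q) ≠ (i, j) → u p q = w p q) (k : ℕ) :
    ∀ p q : Fin n, i ≤ p → q ≤ j → (p, q) ≠ (i, j) → (u ^ k) p q = (w ^ k) p q := by
  induction k with
  | zero => intro p q _ _ _; simp
  | succ k ih =>
    intro p q hp hq hpq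
    have := ut_mul_diff (A := u ^ k) (B := w ^ k) (A' := u) (B' := w)
      (rug_ut hH1 hu) (rug_ut hH2 (rug_pow hH2 hw k)) p q
      (fun r s hr hs _ => ih r s (hp.trans hr) (hs.trans hq) (below_trans hp hq hpq hr hs))
      (fun r s hr hs _ => hX r s (hp.trans hr) (hs.trans hq) (below_trans hp hq hpq hr hs))
    rw [ih p q hp hq hpq, hX p q hp hq hpq] at this
    rw [pow_succ, pow_succ]
    linarith

theorem ut_pow_diff {n : ℕ} {H1 H2 : Set (Mat n ℝ)} (hH1 : IsRealUnipotentGroup n H1)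
    (hH2 : IsRealUnipotentGroup n H2) {u w : Mat n ℝ} (hu : u ∈ H1) (hw : w ∈ H2)
    (i j : Fin n)
    (hX : ∀ p q : Fin n, i ≤ p → q ≤ j → (p, q) ≠ (i, j) → u p q = w p q) (k : ℕ) :
    (u ^ k) i j - (w ^ k) i j = k * (u i j - w i j) := by
  induction k with
  | zero => simp
  | succ k ih =>
    have := ut_mul_diff (A := u ^ k) (B := w ^ k) (A' := u) (B' := w)
      (rug_ut hH1 hu) (rug_ut hH2 (rug_pow hH2 hw k)) i j
      (ut_pow_agree hH1 hH2 hu hw i j hX k) hX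
    rw [pow_succ, pow_succ, this, ih]
    push_cast
    ring

theorem proper_step {n : ℕ} {H1 H2 : Set (Mat n ℝ)} (hH1 : IsRealUnipotentGroup n H1)
    (hH2 : IsRealUnipotentGroup n H2) (K : Set (Mat n ℝ)) (hK : IsCompact K) (N : ℕ) :
    ∃ K' : Set (Mat n ℝ), IsCompact K' ∧ ∀ h1 ∈ H1, ∀ h2 ∈ H2, h1 * h2⁻¹ ∈ K →
      ∃ a ∈ H1, ∃ b ∈ H2, (∀ p q : Fin n, posRank p q < N → a p q = b p q) ∧
        h1 * a ∈ K' ∧ h2 * b ∈ K' := by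
  induction N with
  | zero =>
    refine ⟨{1}, isCompact_singleton, fun h1 hh1 h2 hh2 _ =>
      ⟨h1⁻¹, hH1.2.2.2 _ hh1, h2⁻¹, hH2.2.2.2 _ hh2, ?_, ?_, ?_⟩⟩
    · intro p q h; omega
    · exact ut_mul_inv (rug_ut hH1 hh1)
    · exact ut_mul_inv (rug_ut hH2 hh2)
  | succ N ih =>
    obtain ⟨K', hK', ih⟩ := ih
    -- either the characters vanish at every position of rank `N`, or not
    by_cases hchi : ∀ i j : Fin n, posRank i j = N → ∀ u ∈ H1, ∀ w ∈ H2,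
        (∀ p q : Fin n, posRank p q < N → u p q = w p q) → u i j = w i j
    · refine ⟨K', hK', fun h1 hh1 h2 hh2 hk => ?_⟩
      obtain ⟨a, ha, b, hb, hab, h3, h4⟩ := ih h1 hh1 h2 hh2 hk
      refine ⟨a, ha, b, hb, fun p q hpq => ?_, h3, h4⟩
      rcases Nat.lt_succ_iff_lt_or_eq.mp hpq with h | h
      · exact hab p q h
      · exact hchi p q h a ha b hb hab
    · push Not at hchi
      obtain ⟨i, j, hij, u, hu, w, hw, huw, hne⟩ := hchi
      have hlow : ∀ p q : Fin n, i ≤ p → q ≤ j → (p, q) ≠ (i, j) → posRank p q < N := by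
        intro p q hp hq hpq
        rw [← hij]
        exact lt_of_le_of_ne (posRank_mono hp hq) fun h => hpq (posRank_inj h)
      obtain ⟨P, hP⟩ := ut_pow_poly (rug_ut hH1 hu)
      obtain ⟨Q, hQ⟩ := ut_pow_poly (rug_ut hH2 hw)
      set U : ℝ → Mat n ℝ := fun t => Matrix.of fun p q => (P p q).eval t with hU
      set W : ℝ → Mat n ℝ := fun t => Matrix.of fun p q => (Q p q).eval t with hW
      have hUm : ∀ t, U t ∈ H1 := rug_path hH1 hu P hP
      have hWm : ∀ t, W t ∈ H2 := rug_path hH2 hw Q hQ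
      have hUc : Continuous U := continuous_matrix fun p q => (P p q).continuous
      have hWc : Continuous W := continuous_matrix fun p q => (Q p q).continuous
      -- agreement of the real powers on positions of rank `< N`
      have hagree : ∀ p q : Fin n, posRank p q < N → ∀ t, U t p q = W t p q := by
        intro p q hpq t
        have : P p q - Q p q = 0 := poly_zero_of_nat _ fun k => by
          rw [Polynomial.eval_sub, ← hP, ← hQ, ut_pow_diff hH1 hH2 hu hw p q, huw p q hpq]
          · ring
          · intro r s hr hs _
            exact huw r s (lt_of_le_of_lt (posRank_mono hr hs) hpq)
        simp [hU, hW, sub_eq_zero.mp this]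
      have hdiff : ∀ t, U t i j - W t i j = t * (u i j - w i j) := by
        intro t
        have : P i j - Q i j - Polynomial.X * Polynomial.C (u i j - w i j) = 0 :=
          poly_zero_of_nat _ fun k => by
            rw [Polynomial.eval_sub, Polynomial.eval_sub, ← hP, ← hQ,
              ut_pow_diff hH1 hH2 hu hw i j fun p q hp hq hpq => huw p q (hlow p q hp hq hpq)]
            simp
        have h2 := congrArg (Polynomial.eval t) this
        simp only [Polynomial.eval_sub, Polynomial.eval_mul, Polynomial.eval_X,
          Polynomial.eval_C, Polynomial.eval_zero] at h2
        simp only [hU, hW, Matrix.of_apply]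
        linarith
      have hne' : u i j - w i j ≠ 0 := sub_ne_zero.mpr hne
      set L : Set (Mat n ℝ) := Set.image Matrix.adjugate K' * K * K' with hL
      have hLc : IsCompact L :=
        ((hK'.image (continuous_id.matrix_adjugate)).mul hK).mul hK'
      set T : Set ℝ := Set.image
        (fun X : Mat n ℝ => (X i j - (1 : Mat n ℝ) i j) / (u i j - w i j)) L
        with hT
      have hTc : IsCompact T :=
        hLc.image (((continuous_id.matrix_elem i j).sub continuous_const).div_const _)
      refine ⟨K' * Set.image U T ∪ K' * Set.image W T,
        (hK'.mul (hTc.image hUc)).union (hK'.mul (hTc.image hWc)), fun h1 hh1 h2 hh2 hk => ?_⟩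
      obtain ⟨a, ha, b, hb, hab, h3, h4⟩ := ih h1 hh1 h2 hh2 hk
      have hau := rug_ut hH1 ha
      have hai := rug_ut hH1 (hH1.2.2.2 _ ha)
      have h1u := rug_ut hH1 hh1
      have h2u := rug_ut hH2 hh2
      have h1a := rug_ut hH1 (hH1.2.2.1 _ hh1 _ ha)
      have hmem : a⁻¹ * b ∈ L := by
        have : a⁻¹ * b = (h1 * a).adjugate * (h1 * h2⁻¹) * (h2 * b) := by
          rw [← ut_inv_eq h1a, Matrix.mul_inv_rev]
          calc a⁻¹ * b = a⁻¹ * (h1⁻¹ * h1) * (h2⁻¹ * h2) * b := by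
                rw [ut_inv_mul h1u, ut_inv_mul h2u]; simp
            _ = _ := by noncomm_ring
        rw [this]
        exact Set.mul_mem_mul (Set.mul_mem_mul (Set.mem_image_of_mem _ h3) hk) h4
      have hent : (a⁻¹ * b) i j - (1 : Mat n ℝ) i j = b i j - a i j := by
        have h1' : (1 : Mat n ℝ) ∈ UTset n := rug_ut hH1 hH1.2.1
        have e : a⁻¹ * b - 1 = a⁻¹ * (b - a) * 1 := by
          rw [Matrix.mul_sub, ut_inv_mul hau, mul_one]
        rw [← Matrix.sub_apply, e, ut_entry hai h1' i j, Matrix.sub_apply]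
        intro p q hp hq hpq
        rw [Matrix.sub_apply, hab p q (hlow p q hp hq hpq), sub_self]
      set t : ℝ := (b i j - a i j) / (u i j - w i j) with ht
      have htT : t ∈ T := ⟨a⁻¹ * b, hmem, by simp only [hent, ht]⟩
      refine ⟨a * U t, hH1.2.2.1 _ ha _ (hUm t), b * W t, hH2.2.2.1 _ hb _ (hWm t), ?_, ?_, ?_⟩
      · intro p q hpq
        have hbelow : ∀ r s : Fin n, p ≤ r → s ≤ q → (r, s) ≠ (p, q) → posRank r s < N := by
          intro r s hr hs hrs
          have h5 : posRank r s < posRank p q :=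
            lt_of_le_of_ne (posRank_mono hr hs) fun h => hrs (posRank_inj h)
          omega
        have := ut_mul_diff (A := a) (B := b) (A' := U t) (B' := W t)
          (rug_ut hH1 (hUm t)) (rug_ut hH2 hb) p q
          (fun r s hr hs hrs => hab r s (hbelow r s hr hs hrs))
          (fun r s hr hs hrs => hagree r s (hbelow r s hr hs hrs) t)
        rw [← sub_eq_zero, this]
        rcases Nat.lt_succ_iff_lt_or_eq.mp hpq with h | h
        · rw [hab p q h, hagree p q h]; ring
        · obtain ⟨rfl, rfl⟩ := Prod.mk.inj (posRank_inj (h.trans hij.symm))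
          rw [hdiff, ht]
          field_simp
          ring
      · left
        rw [← mul_assoc]
        exact Set.mul_mem_mul h3 (Set.mem_image_of_mem _ htT)
      · right
        rw [← mul_assoc]
        exact Set.mul_mem_mul h4 (Set.mem_image_of_mem _ htT)

theorem proper_main {n : ℕ} {H1 H2 : Set (Mat n ℝ)} (hH1 : IsRealUnipotentGroup n H1)
    (hH2 : IsRealUnipotentGroup n H2) (K : Set (Mat n ℝ)) (hK : IsCompact K) :
    ∃ K' : Set (Mat n ℝ), IsCompact K' ∧ ∀ h1 ∈ H1, ∀ h2 ∈ H2, h1 * h2⁻¹ ∈ K →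
      ∃ m ∈ H1 ∩ H2, h1 * m ∈ K' ∧ h2 * m ∈ K' := by
  obtain ⟨K', hK', h⟩ := proper_step hH1 hH2 K hK (n * n)
  refine ⟨K', hK', fun h1 hh1 h2 hh2 hk => ?_⟩
  obtain ⟨a, ha, b, hb, hab, h3, h4⟩ := h h1 hh1 h2 hh2 hk
  have : a = b := by
    ext p q
    exact hab p q (Fin.isLt _)
  subst this
  exact ⟨a, ⟨ha, hb⟩, h3, h4⟩

theorem ofSeq_eq_iff {f g : ℕ → ℝ} :
    Hyperreal.ofSeq f = Hyperreal.ofSeq g ↔ ∀ᶠ k in hyperfilter ℕ, f k = g k :=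
  Filter.Germ.coe_eq

theorem matOfSeq_eq_iff {n : ℕ} {u v : ℕ → Mat n ℝ} :
    matOfSeq n u = matOfSeq n v ↔ ∀ᶠ k in hyperfilter ℕ, u k = v k := by
  constructor
  · intro h
    have h1 : ∀ i j, ∀ᶠ k in hyperfilter ℕ, u k i j = v k i j := fun i j =>
      ofSeq_eq_iff.mp (congrFun (congrFun h i) j)
    have h2 : ∀ᶠ k in hyperfilter ℕ, ∀ i j, u k i j = v k i j :=
      eventually_all.mpr fun i => eventually_all.mpr (h1 i)
    filter_upwards [h2] with k hk
    ext i j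
    exact hk i j
  · intro h
    ext i j
    refine ofSeq_eq_iff.mpr ?_
    filter_upwards [h] with k hk
    rw [hk]

theorem matOfSeq_mul {n : ℕ} (u v : ℕ → Mat n ℝ) :
    matOfSeq n u * matOfSeq n v = matOfSeq n (fun k => u k * v k) := by
  ext i j
  rw [Matrix.mul_apply]
  let φ : (ℕ → ℝ) →+* Hyperreal := Filter.Germ.coeRingHom (hyperfilter ℕ : Filter ℕ)
  have hφ : ∀ f, φ f = Hyperreal.ofSeq f := fun f => rfl
  simp only [matOfSeq, Matrix.of_apply, ← hφ]
  simp_rw [← map_mul]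
  rw [← map_sum]
  congr 1
  ext k
  simp [Matrix.mul_apply]

theorem matCast_eq {n : ℕ} (g : Mat n ℝ) : matCast g = matOfSeq n (fun _ => g) := rfl

theorem infinitesimal_iff_tendsto {n : ℕ} (u : ℕ → Mat n ℝ) :
    (∀ i j, Hyperreal.Infinitesimal (matOfSeq n u i j - (1 : Mat n Hyperreal) i j)) ↔
      Tendsto u (hyperfilter ℕ) (nhds 1) := by
  have h1 : ∀ i j, Hyperreal.Infinitesimal (matOfSeq n u i j - (1 : Mat n Hyperreal) i j) ↔
      Tendsto (fun k => u k i j) (hyperfilter ℕ) (nhds ((1 : Mat n ℝ) i j)) := by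
    intro i j
    have e : matOfSeq n u i j - (1 : Mat n Hyperreal) i j =
        Hyperreal.ofSeq (fun k => u k i j - (1 : Mat n ℝ) i j) := by
      rcases eq_or_ne i j with rfl | h
      · simp only [Matrix.one_apply_eq]; rfl
      · simp only [Matrix.one_apply_ne h]; rfl
    rw [e, Hyperreal.Infinitesimal, Hyperreal.isSt_ofSeq_iff_tendsto]
    exact tendsto_sub_nhds_zero_iff
  simp only [h1]
  exact ⟨fun h => tendsto_pi_nhds.mpr fun i => tendsto_pi_nhds.mpr fun j => h i j,
    fun h i j => tendsto_pi_nhds.mp (tendsto_pi_nhds.mp h i) j⟩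

theorem near_iff {n : ℕ} (G : Set (Mat n ℝ)) (g : Mat n ℝ) (H : Set (Mat n ℝ))
    (u : ℕ → Mat n ℝ) :
    NearCoset n G g H (matOfSeq n u) ↔ ∃ e h : ℕ → Mat n ℝ,
      (∀ᶠ k in hyperfilter ℕ, e k ∈ G) ∧ Tendsto e (hyperfilter ℕ) (nhds 1) ∧
      (∀ᶠ k in hyperfilter ℕ, h k ∈ H) ∧
      ∀ᶠ k in hyperfilter ℕ, u k = e k * (g * h k) := by
  constructor
  · rintro ⟨ε, ⟨⟨e, he, rfl⟩, hinf⟩, x, ⟨c, hc, y, ⟨h, hh, rfl⟩, hx⟩, hu⟩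
    rw [Set.mem_singleton_iff] at hc
    subst hc
    dsimp only at hx hu
    refine ⟨e, h, he, (infinitesimal_iff_tendsto e).mp hinf, hh, ?_⟩
    rw [← hx, matCast_eq, matOfSeq_mul, matOfSeq_mul] at hu
    exact matOfSeq_eq_iff.mp hu.symm
  · rintro ⟨e, h, he, ht, hh, hu⟩
    refine ⟨matOfSeq n e, ⟨⟨e, he, rfl⟩, (infinitesimal_iff_tendsto e).mpr ht⟩,
      matCast g * matOfSeq n h, Set.mul_mem_mul rfl ⟨h, hh, rfl⟩, ?_⟩
    dsimp only
    rw [matCast_eq, matOfSeq_mul, matOfSeq_mul]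
    exact (matOfSeq_eq_iff.mpr hu).symm

/-- Two near cosets meet in a near coset. -/
theorem near_inter {n : ℕ} {G : Set (Mat n ℝ)} (hG : IsRealUnipotentGroup n G)
    {g1 g2 : Mat n ℝ} (hg1 : g1 ∈ G) (hg2 : g2 ∈ G) {H1 H2 : Set (Mat n ℝ)}
    (hH1 : IsRealAlgSubgroup n G H1) (hH2 : IsRealAlgSubgroup n G H2) (u : ℕ → Mat n ℝ)
    (hn1 : NearCoset n G g1 H1 (matOfSeq n u)) (hn2 : NearCoset n G g2 H2 (matOfSeq n u)) :
    ∃ x ∈ H1, ∃ y ∈ H2, g1 * x = g2 * y ∧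
      NearCoset n G (g1 * x) (H1 ∩ H2) (matOfSeq n u) := by
  rw [near_iff] at hn1 hn2
  obtain ⟨e1, h1, he1, ht1, hh1, hu1⟩ := hn1
  obtain ⟨e2, h2, he2, ht2, hh2, hu2⟩ := hn2
  have hg1u := rug_ut hG hg1
  -- the quotient converges
  have hq : Tendsto (fun k => g1⁻¹ * (e1 k).adjugate * e2 k * g2) (hyperfilter ℕ)
      (nhds (g1⁻¹ * (1 : Mat n ℝ).adjugate * 1 * g2)) := by
    have hadj : Tendsto (fun k => (e1 k).adjugate) (hyperfilter ℕ)
        (nhds (1 : Mat n ℝ).adjugate) :=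
      ((continuous_id.matrix_adjugate).tendsto (1 : Mat n ℝ)).comp ht1
    exact ((hadj.const_mul _).mul ht2).mul_const _
  have : LocallyCompactSpace (Mat n ℝ) :=
    inferInstanceAs (LocallyCompactSpace (Fin n → Fin n → ℝ))
  obtain ⟨K, hK, hKn⟩ := exists_compact_mem_nhds (g1⁻¹ * (1 : Mat n ℝ).adjugate * 1 * g2)
  obtain ⟨K', hK', hprop⟩ := proper_main hH1.2 hH2.2 K hK
  have hex : ∀ᶠ k in hyperfilter ℕ, ∃ m ∈ H1 ∩ H2, h1 k * m ∈ K' ∧ h2 k * m ∈ K' := by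
    filter_upwards [hq.eventually hKn, he1, he2, hh1, hh2, hu1, hu2] with k hk a1 a2 b1 b2 c1 c2
    apply hprop _ b1 _ b2
    have b2u := rug_ut hH2.2 b2
    have a1u := rug_ut hG a1
    have : h1 k * (h2 k)⁻¹ = g1⁻¹ * (e1 k).adjugate * e2 k * g2 := by
      rw [← ut_inv_eq a1u]
      calc h1 k * (h2 k)⁻¹ = (g1⁻¹ * ((e1 k)⁻¹ * e1 k) * g1) * h1 k * (h2 k)⁻¹ := by
            rw [ut_inv_mul a1u, mul_one, ut_inv_mul hg1u, one_mul]
        _ = g1⁻¹ * (e1 k)⁻¹ * (e1 k * (g1 * h1 k)) * (h2 k)⁻¹ := by noncomm_ring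
        _ = g1⁻¹ * (e1 k)⁻¹ * (e2 k * (g2 * h2 k)) * (h2 k)⁻¹ := by rw [← c1, c2]
        _ = g1⁻¹ * (e1 k)⁻¹ * e2 k * g2 * (h2 k * (h2 k)⁻¹) := by noncomm_ring
        _ = _ := by rw [ut_mul_inv b2u, mul_one]
    rw [this]
    exact hk
  choose! m hm using fun (k : ℕ) (h : ∃ m ∈ H1 ∩ H2, h1 k * m ∈ K' ∧ h2 k * m ∈ K') => h
  have hm' := hex.mono hm
  have hlim : ∀ f : ℕ → Mat n ℝ, (∀ᶠ k in hyperfilter ℕ, f k ∈ K') →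
      ∃ x, Tendsto f (hyperfilter ℕ) (nhds x) := by
    intro f hf
    obtain ⟨x, -, hx⟩ := hK'.ultrafilter_le_nhds' ((hyperfilter ℕ).map f) hf
    exact ⟨x, hx⟩
  obtain ⟨x, hx⟩ := hlim (fun k => h1 k * m k) (hm'.mono fun k hk => hk.2.1)
  obtain ⟨y, hy⟩ := hlim (fun k => h2 k * m k) (hm'.mono fun k hk => hk.2.2)
  have hxH : x ∈ H1 := (rug_closed hH1.2).mem_of_tendsto hx (by
    filter_upwards [hm', hh1] with k hk b1
    exact hH1.2.2.2.1 _ b1 _ hk.1.1)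
  have hyH : y ∈ H2 := (rug_closed hH2.2).mem_of_tendsto hy (by
    filter_upwards [hm', hh2] with k hk b1
    exact hH2.2.2.2.1 _ b1 _ hk.1.2)
  have hl1 : Tendsto (fun k => e1 k * (g1 * (h1 k * m k))) (hyperfilter ℕ)
      (nhds (1 * (g1 * x))) := ht1.mul (hx.const_mul _)
  have hl2 : Tendsto (fun k => e2 k * (g2 * (h2 k * m k))) (hyperfilter ℕ)
      (nhds (1 * (g2 * y))) := ht2.mul (hy.const_mul _)
  have hxy : g1 * x = g2 * y := by
    have : Tendsto (fun k => e1 k * (g1 * (h1 k * m k))) (hyperfilter ℕ)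
        (nhds (1 * (g2 * y))) := by
      refine hl2.congr' ?_
      filter_upwards [hu1, hu2] with k c1 c2
      calc e2 k * (g2 * (h2 k * m k)) = e2 k * (g2 * h2 k) * m k := by noncomm_ring
        _ = e1 k * (g1 * h1 k) * m k := by rw [← c1, ← c2]
        _ = _ := by noncomm_ring
    simpa using tendsto_nhds_unique hl1 this
  refine ⟨x, hxH, y, hyH, hxy, ?_⟩
  have hgG : g1 * x ∈ G := hG.2.2.1 _ hg1 _ (hH1.1 hxH)
  have hgu := rug_ut hG hgG
  rw [near_iff]
  refine ⟨fun k => e1 k * (g1 * (h1 k * m k)) * (g1 * x)⁻¹, fun k => (m k)⁻¹, ?_, ?_, ?_, ?_⟩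
  · filter_upwards [he1, hh1, hm'] with k a1 b1 hk
    exact hG.2.2.1 _ (hG.2.2.1 _ a1 _ (hG.2.2.1 _ hg1 _
      (hG.2.2.1 _ (hH1.1 b1) _ (hH1.1 hk.1.1)))) _ (hG.2.2.2 _ hgG)
  · have := hl1.mul_const (g1 * x)⁻¹
    rwa [one_mul, ut_mul_inv hgu] at this
  · filter_upwards [hm'] with k hk
    exact (rug_inter hH1.2 hH2.2).2.2.2 _ hk.1
  · filter_upwards [hm', hu1] with k hk c1
    have hmu := rug_ut hH1.2 hk.1.1
    symm
    calc e1 k * (g1 * (h1 k * m k)) * (g1 * x)⁻¹ * ((g1 * x) * (m k)⁻¹)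
        = e1 k * (g1 * (h1 k * m k)) * ((g1 * x)⁻¹ * (g1 * x)) * (m k)⁻¹ := by
          simp only [mul_assoc]
      _ = e1 k * (g1 * h1 k) * (m k * (m k)⁻¹) := by
          rw [ut_inv_mul hgu]; simp only [mul_assoc, mul_one, one_mul]
      _ = u k := by rw [ut_mul_inv hmu, mul_one, c1]

/-- The vanishing ideal of a set of matrices. -/
def matIdeal {n : ℕ} (V : Set (Mat n ℝ)) : Ideal (MvPolynomial (Fin n × Fin n) ℝ) :=
  MvPolynomial.vanishingIdeal ℝ (Set.image matEval V)

theorem mem_matIdeal {n : ℕ} {V : Set (Mat n ℝ)} {p : MvPolynomial (Fin n × Fin n) ℝ} :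
    p ∈ matIdeal V ↔ ∀ A ∈ V, MvPolynomial.eval (matEval A) p = 0 := by
  simp [matIdeal, MvPolynomial.mem_vanishingIdeal_iff, MvPolynomial.aeval_eq_eval]

/-- Cosets are Zariski closed. -/
theorem coset_zariski {n : ℕ} {G H : Set (Mat n ℝ)} (hG : IsRealUnipotentGroup n G)
    (hH : IsRealAlgSubgroup n G H) {g : Mat n ℝ} (hg : g ∈ G) {A : Mat n ℝ} (hA : A ∈ G)
    (h : ∀ p ∈ matIdeal ({g} * H), MvPolynomial.eval (matEval A) p = 0) : A ∈ {g} * H := by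
  have hgu := rug_ut hG hg
  have hgA : g⁻¹ * A ∈ UTset n := rug_ut hG (hG.2.2.1 _ (hG.2.2.2 _ hg) _ hA)
  obtain ⟨-, ⟨S, hS⟩, -⟩ := hH
  suffices hm : g⁻¹ * A ∈ H by
    refine ⟨g, rfl, g⁻¹ * A, hm, ?_⟩
    dsimp only
    rw [← mul_assoc, ut_mul_inv hgu, one_mul]
  rw [hS]
  refine ⟨hgA, fun p hp => ?_⟩
  let T : Fin n × Fin n → MvPolynomial (Fin n × Fin n) ℝ := fun ij =>
    ∑ r, MvPolynomial.C (g⁻¹ ij.1 r) * MvPolynomial.X (r, ij.2)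
  have key : ∀ B : Mat n ℝ, MvPolynomial.eval (matEval B) (MvPolynomial.bind₁ T p) =
      MvPolynomial.eval (matEval (g⁻¹ * B)) p := by
    intro B
    rw [← MvPolynomial.coe_aeval_eq_eval, RingHom.coe_coe, MvPolynomial.aeval_bind₁,
      MvPolynomial.aeval_eq_eval]
    congr 2
    ext ij
    simp [T, matEval, Matrix.mul_apply]
  rw [← key]
  apply h
  rw [mem_matIdeal]
  rintro B ⟨g', hg', x, hx, rfl⟩
  rw [Set.mem_singleton_iff] at hg'
  subst hg'
  dsimp only
  rw [key, ← mul_assoc, ut_inv_mul hgu, one_mul]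
  rw [hS] at hx
  exact hx.2 p hp

/-- existence of a smallest coset near `α`. -/
theorem stmt2 {n : ℕ} (G : Set (Mat n ℝ)) (hG : IsRealUnipotentGroup n G)
    (α : Mat n Hyperreal) (hα : α ∈ matSharp n G) :
    ∃ g ∈ G, ∃ H : Set (Mat n ℝ), IsRealAlgSubgroup n G H ∧ NearCoset n G g H α ∧
      ∀ g' ∈ G, ∀ H' : Set (Mat n ℝ), IsRealAlgSubgroup n G H' → NearCoset n G g' H' α →
        {g} * H ⊆ {g'} * H' := by
  obtain ⟨u, hu, rfl⟩ := hα
  let F : Set (Ideal (MvPolynomial (Fin n × Fin n) ℝ)) :=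
    {I | ∃ g ∈ G, ∃ H : Set (Mat n ℝ), IsRealAlgSubgroup n G H ∧
      NearCoset n G g H (matOfSeq n u) ∧ matIdeal ({g} * H) = I}
  have hF : F.Nonempty := by
    refine ⟨_, 1, hG.2.1, G, ⟨subset_rfl, hG⟩, ?_, rfl⟩
    rw [near_iff]
    exact ⟨fun _ => 1, u, Eventually.of_forall fun _ => hG.2.1, tendsto_const_nhds, hu,
      Eventually.of_forall fun k => by simp⟩
  obtain ⟨I, ⟨g, hg, H, hH, hnear, rfl⟩, hmax⟩ :=
    set_has_maximal_iff_noetherian.mpr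
      (inferInstance : IsNoetherianRing (MvPolynomial (Fin n × Fin n) ℝ)) F hF
  refine ⟨g, hg, H, hH, hnear, fun g' hg' H' hH' hnear' => ?_⟩
  obtain ⟨x, hx, y, hy, hxy, hnear2⟩ := near_inter hG hg hg' hH hH' u hnear hnear'
  have hgx : g * x ∈ G := hG.2.2.1 _ hg _ (hH.1 hx)
  have hI : IsRealAlgSubgroup n G (H ∩ H') :=
    ⟨Set.inter_subset_left.trans hH.1, rug_inter hH.2 hH'.2⟩
  have hsub : {g * x} * (H ∩ H') ⊆ {g} * H := by
    rintro _ ⟨_, rfl, z, hz, rfl⟩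
    exact ⟨g, rfl, x * z, hH.2.2.2.1 _ hx _ hz.1, (mul_assoc _ _ _).symm⟩
  have hle : matIdeal ({g} * H) ≤ matIdeal ({g * x} * (H ∩ H')) := by
    intro p hp
    rw [mem_matIdeal] at hp ⊢
    exact fun A hA => hp A (hsub hA)
  have heq : matIdeal ({g} * H) = matIdeal ({g * x} * (H ∩ H')) := by
    by_contra hne
    exact hmax _ ⟨g * x, hgx, H ∩ H', hI, hnear2, rfl⟩ (lt_of_le_of_ne hle hne)
  intro A hA
  have hAG : A ∈ G := by
    obtain ⟨_, rfl, z, hz, rfl⟩ := hA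
    exact hG.2.2.1 _ hg _ (hH.1 hz)
  have hA2 : A ∈ {g * x} * (H ∩ H') := by
    refine coset_zariski hG hI hgx hAG fun p hp => ?_
    rw [← heq, mem_matIdeal] at hp
    exact hp A hA
  obtain ⟨_, rfl, z, hz, rfl⟩ := hA2
  refine ⟨g', rfl, y * z, hH'.2.2.2.1 _ hy _ hz.2, ?_⟩
  dsimp only
  rw [hxy, mul_assoc]
end
end

section
/- Let ε ∈ ℝ* be a positive infinitesimal (0 < ε and ε < r for every positive real r). In SL(2,ℝ*) let α be the diagonal matrix with entries ε and ε⁻¹. Let D = {diag(a, a⁻¹) : a ∈ ℝ, a ≠ 0} be the diagonal subgroup of SL(2,ℝ), let b = [[1,1],[0,1]], and let H = b⁻¹Db. Then: (i) α ∈ μ·D^♯, i.e. the coset D is near α; (ii) α ∈ μ·b·H^♯, i.e. the coset bH = Db is near α; and (iii) D ∩ bH = ∅. Here μ denotes the set of elements of SL(2,ℝ)^♯ all of whose entries are infinitesimally close to those of the identity matrix. In particular, there is no smallest coset (of a real algebraic subgroup of SL(2,ℝ)) near α, so the existence of smallest near cosets fails for SL(2,ℝ). -/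
open Pointwise Filter

noncomputable section

/-- `SL(2,ℝ)` as a set of real `2 × 2` matrices. -/
def SL2set : Set (Mat 2 ℝ) := {A | A.det = 1}

/-- The diagonal subgroup `D` of `SL(2,ℝ)`. -/
def Dset : Set (Mat 2 ℝ) := {A | ∃ a : ℝ, a ≠ 0 ∧ A = !![a, 0; 0, a⁻¹]}

/-- The matrix `b = [[1,1],[0,1]]`. -/
def bMat : Mat 2 ℝ := !![1, 1; 0, 1]

/-- The conjugate `H = b⁻¹Db`. -/
def Hconj : Set (Mat 2 ℝ) := {A | ∃ dm ∈ Dset, A = bMat⁻¹ * dm * bMat}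

/-- A real algebraic subgroup of `SL(2,ℝ)`. -/
def IsRealAlgSubgroupSL2 (K : Set (Mat 2 ℝ)) : Prop :=
  K ⊆ SL2set ∧
    (∃ S : Set (MvPolynomial (Fin 2 × Fin 2) ℝ),
      K = {A | A ∈ SL2set ∧ ∀ p ∈ S, MvPolynomial.eval (matEval A) p = 0}) ∧
    (1 : Mat 2 ℝ) ∈ K ∧ (∀ a ∈ K, ∀ b ∈ K, a * b ∈ K) ∧ ∀ a ∈ K, a⁻¹ ∈ K

theorem stmt7_binv : bMat⁻¹ = (!![1, -1; 0, 1] : Mat 2 ℝ) := by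
  apply Matrix.inv_eq_right_inv
  ext i j
  fin_cases i <;> fin_cases j <;> simp [bMat, Matrix.mul_apply, Fin.sum_univ_two]

theorem stmt7_conj (a c : ℝ) : bMat⁻¹ * (!![a, 0; 0, c] : Mat 2 ℝ) * bMat = !![a, a - c; 0, c] := by
  rw [stmt7_binv]
  ext i j
  fin_cases i <;> fin_cases j <;> simp [bMat, Matrix.mul_apply, Fin.sum_univ_two] <;> ring

theorem stmt7_mem_H (A : Mat 2 ℝ) : A ∈ Hconj ↔ ∃ a : ℝ, a ≠ 0 ∧ A = !![a, a - a⁻¹; 0, a⁻¹] := by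
  constructor
  · rintro ⟨_, ⟨a, ha, rfl⟩, rfl⟩
    exact ⟨a, ha, stmt7_conj _ _⟩
  · rintro ⟨a, ha, rfl⟩
    exact ⟨_, ⟨a, ha, rfl⟩, (stmt7_conj _ _).symm⟩

theorem stmt7_D : IsRealAlgSubgroupSL2 Dset := by
  refine ⟨?_, ⟨{MvPolynomial.X (0, 1), MvPolynomial.X (1, 0)}, ?_⟩, ⟨1, one_ne_zero, ?_⟩, ?_, ?_⟩
  · rintro _ ⟨a, ha, rfl⟩
    simp [SL2set, Matrix.det_fin_two, ha]
  · ext A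
    constructor
    · rintro ⟨a, ha, rfl⟩
      simp [SL2set, Matrix.det_fin_two, ha, matEval]
    · rintro ⟨h, hp⟩
      simp only [Set.mem_insert_iff, Set.mem_singleton_iff, forall_eq_or_imp, forall_eq,
        MvPolynomial.eval_X, matEval] at hp
      obtain ⟨h1, h2⟩ := hp
      simp only [SL2set, Set.mem_setOf_eq, Matrix.det_fin_two, h1, h2] at h
      have h3 : A 0 0 * A 1 1 = 1 := by linarith
      refine ⟨A 0 0, left_ne_zero_of_mul_eq_one h3, ?_⟩
      rw [← eq_inv_of_mul_eq_one_right h3]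
      ext i j
      fin_cases i <;> fin_cases j <;> simp [h1, h2]
  · ext i j
    fin_cases i <;> fin_cases j <;> simp
  · rintro _ ⟨a, ha, rfl⟩ _ ⟨c, hc, rfl⟩
    refine ⟨a * c, mul_ne_zero ha hc, ?_⟩
    ext i j
    fin_cases i <;> fin_cases j <;> simp [Matrix.mul_apply, Fin.sum_univ_two, mul_comm]
  · rintro _ ⟨a, ha, rfl⟩
    refine ⟨a⁻¹, inv_ne_zero ha, ?_⟩
    apply Matrix.inv_eq_right_inv
    ext i j
    fin_cases i <;> fin_cases j <;> simp [Matrix.mul_apply, Fin.sum_univ_two, ha]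

theorem stmt7_H : IsRealAlgSubgroupSL2 Hconj := by
  refine ⟨?_, ⟨{MvPolynomial.X (0, 1) + MvPolynomial.X (1, 1) - MvPolynomial.X (0, 0),
    MvPolynomial.X (1, 0)}, ?_⟩, ?_, ?_, ?_⟩
  · intro A hA
    obtain ⟨a, ha, rfl⟩ := (stmt7_mem_H A).1 hA
    simp [SL2set, Matrix.det_fin_two, ha]
  · ext A
    rw [stmt7_mem_H]
    constructor
    · rintro ⟨a, ha, rfl⟩
      simp [SL2set, Matrix.det_fin_two, ha, matEval]
    · rintro ⟨h, hp⟩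
      simp only [Set.mem_insert_iff, Set.mem_singleton_iff, forall_eq_or_imp, forall_eq,
        MvPolynomial.eval_X, matEval, map_add, map_sub] at hp
      obtain ⟨h1, h2⟩ := hp
      simp only [SL2set, Set.mem_setOf_eq, Matrix.det_fin_two, h2] at h
      have h3 : A 0 0 * A 1 1 = 1 := by linarith
      refine ⟨A 0 0, left_ne_zero_of_mul_eq_one h3, ?_⟩
      rw [← eq_inv_of_mul_eq_one_right h3]
      have h4 : A 0 1 = A 0 0 - A 1 1 := by linarith
      ext i j
      fin_cases i <;> fin_cases j <;> simp [h4, h2]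
  · rw [stmt7_mem_H]
    refine ⟨1, one_ne_zero, ?_⟩
    ext i j
    fin_cases i <;> fin_cases j <;> simp
  · intro A hA B hB
    rw [stmt7_mem_H] at *
    obtain ⟨a, ha, rfl⟩ := hA
    obtain ⟨c, hc, rfl⟩ := hB
    refine ⟨a * c, mul_ne_zero ha hc, ?_⟩
    ext i j
    fin_cases i <;> fin_cases j <;> simp [Matrix.mul_apply, Fin.sum_univ_two] <;> ring
  · intro A hA
    rw [stmt7_mem_H] at *
    obtain ⟨a, ha, rfl⟩ := hA
    refine ⟨a⁻¹, inv_ne_zero ha, ?_⟩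
    apply Matrix.inv_eq_right_inv
    ext i j
    fin_cases i <;> fin_cases j <;> simp [Matrix.mul_apply, Fin.sum_univ_two, ha]
    field_simp
    ring

theorem stmt7_disj : Dset ∩ ({bMat} * Hconj) = ∅ := by
  rw [Set.eq_empty_iff_forall_notMem]
  rintro A ⟨⟨a, ha, rfl⟩, hA⟩
  rw [Set.singleton_mul] at hA
  obtain ⟨B, hB, hE⟩ := hA
  obtain ⟨c, hc, rfl⟩ := (stmt7_mem_H B).1 hB
  have := congrFun (congrFun hE 0) 1
  simp [bMat, Matrix.mul_apply, Fin.sum_univ_two] at this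
  exact hc this

/-- in `SL(2,ℝ)` there need not be a smallest coset near a point:
for `α = diag(ε, ε⁻¹)` with `ε` a positive infinitesimal, both `D` and `bH = Db` are
near `α`, yet `D ∩ bH = ∅`; hence no smallest near coset exists. -/
theorem stmt7 (ε : Hyperreal) (hpos : 0 < ε) (hinf : ∀ r : ℝ, 0 < r → ε < (r : Hyperreal)) :
    (!![ε, 0; 0, ε⁻¹] : Mat 2 Hyperreal) ∈ muSet 2 SL2set * matSharp 2 Dset ∧
    (!![ε, 0; 0, ε⁻¹] : Mat 2 Hyperreal) ∈
      muSet 2 SL2set * ({matCast bMat} * matSharp 2 Hconj) ∧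
    Dset ∩ ({bMat} * Hconj) = ∅ ∧
    ¬ ∃ g ∈ SL2set, ∃ K : Set (Mat 2 ℝ), IsRealAlgSubgroupSL2 K ∧
      (!![ε, 0; 0, ε⁻¹] : Mat 2 Hyperreal) ∈ muSet 2 SL2set * ({matCast g} * matSharp 2 K) ∧
      ∀ g' ∈ SL2set, ∀ K' : Set (Mat 2 ℝ), IsRealAlgSubgroupSL2 K' →
        (!![ε, 0; 0, ε⁻¹] : Mat 2 Hyperreal) ∈
          muSet 2 SL2set * ({matCast g'} * matSharp 2 K') →
        {g} * K ⊆ {g'} * K' := by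
  have hε : ε ≠ 0 := hpos.ne'
  obtain ⟨f, rfl⟩ := Hyperreal.ofSeq_surjective ε
  have hf : ∀ᶠ k in hyperfilter ℕ, f k ≠ 0 := by
    have := Hyperreal.ofSeq_lt_ofSeq.1 (show Hyperreal.ofSeq (fun _ => 0) < Hyperreal.ofSeq f from hpos)
    exact this.mono fun k hk => ne_of_gt hk
  have hone : (1 : Mat 2 Hyperreal) ∈ muSet 2 SL2set := by
    refine ⟨⟨fun _ => 1, Eventually.of_forall fun _ => by simp [SL2set], ?_⟩, ?_⟩
    · ext i j
      fin_cases i <;> fin_cases j <;> simp [matOfSeq] <;> rfl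
    · intro i j
      rw [sub_self]
      exact Hyperreal.infinitesimal_zero
  have hD : (!![Hyperreal.ofSeq f, 0; 0, (Hyperreal.ofSeq f)⁻¹] : Mat 2 Hyperreal) ∈ matSharp 2 Dset := by
    refine ⟨fun k => !![f k, 0; 0, (f k)⁻¹], hf.mono fun k hk => ⟨f k, hk, rfl⟩, ?_⟩
    ext i j
    fin_cases i <;> fin_cases j <;> simp [matOfSeq] <;> rfl
  have h1 : (!![Hyperreal.ofSeq f, 0; 0, (Hyperreal.ofSeq f)⁻¹] : Mat 2 Hyperreal) ∈
      muSet 2 SL2set * matSharp 2 Dset := ⟨1, hone, _, hD, one_mul _⟩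
  have h2 : (!![Hyperreal.ofSeq f, 0; 0, (Hyperreal.ofSeq f)⁻¹] : Mat 2 Hyperreal) ∈
      muSet 2 SL2set * ({matCast bMat} * matSharp 2 Hconj) := by
    have hi : Hyperreal.Infinitesimal (Hyperreal.ofSeq f) := by
      rw [Hyperreal.infinitesimal_def]
      exact fun r hr => ⟨lt_trans (by exact_mod_cast neg_neg_of_pos hr) hpos, hinf r hr⟩
    refine ⟨!![1, -(Hyperreal.ofSeq f * Hyperreal.ofSeq f); 0, 1],
      ⟨⟨fun k => !![1, -(f k * f k); 0, 1], ?_, ?_⟩, ?_⟩, _,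
      ⟨_, rfl, !![Hyperreal.ofSeq f, Hyperreal.ofSeq f - (Hyperreal.ofSeq f)⁻¹; 0, (Hyperreal.ofSeq f)⁻¹],
        ⟨fun k => !![f k, f k - (f k)⁻¹; 0, (f k)⁻¹], ?_, ?_⟩, rfl⟩, ?_⟩
    · exact Eventually.of_forall fun _ => by simp [SL2set, Matrix.det_fin_two]
    · ext i j
      fin_cases i <;> fin_cases j <;> simp [matOfSeq] <;> rfl
    · have := (hi.mul hi).neg
      intro i j
      fin_cases i <;> fin_cases j <;> simp [Hyperreal.infinitesimal_zero]
      simpa using this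
    · exact hf.mono fun k hk => (stmt7_mem_H _).2 ⟨f k, hk, rfl⟩
    · ext i j
      fin_cases i <;> fin_cases j <;> simp [matOfSeq] <;> rfl
    · ext i j
      fin_cases i <;> fin_cases j <;>
        simp [matCast, bMat, Matrix.mul_apply, Fin.sum_univ_two, hε]
  refine ⟨h1, h2, stmt7_disj, ?_⟩
  rintro ⟨g, -, K, hK, -, hmin⟩
  have hgK : g ∈ {g} * K := ⟨g, rfl, 1, hK.2.2.1, mul_one g⟩
  have hg1 : g ∈ Dset := by
    have := hmin 1 (by simp [SL2set]) Dset stmt7_D ?_ hgK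
    · simpa using this
    · refine ⟨1, hone, _, ⟨_, rfl, _, hD, rfl⟩, ?_⟩
      have : matCast (1 : Mat 2 ℝ) = 1 := by
        ext i j
        fin_cases i <;> fin_cases j <;> simp [matCast]
      simp [this]
  have hg2 : g ∈ {bMat} * Hconj :=
    hmin bMat (by simp [SL2set, bMat, Matrix.det_fin_two]) Hconj stmt7_H h2 hgK
  have : g ∈ Dset ∩ ({bMat} * Hconj) := ⟨hg1, hg2⟩
  rw [stmt7_disj] at this
  exact this
end
end

section
/- Let G ⊆ UT(n,ℝ) be a real unipotent group and let Γ be a lattice in G. If H is a real algebraic subgroup of G with Γ ⊆ H, then H = G. -/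
open Pointwise Filter

noncomputable section

/-- Polynomials all of whose monomials have weight `< D`, where `x_ij` has weight `j`. -/
def lowWt (n D : ℕ) : Submodule ℝ (MvPolynomial (Fin n × Fin n) ℝ) :=
  MvPolynomial.restrictSupport ℝ
    {d | Finsupp.weight (fun ij : Fin n × Fin n => (ij.2 : ℕ)) d < D}

lemma lowWt_mono {n a b : ℕ} (h : a ≤ b) : lowWt n a ≤ lowWt n b := by
  intro p hp
  rw [lowWt, MvPolynomial.mem_restrictSupport_iff] at hp ⊢
  intro d hd
  exact lt_of_lt_of_le (hp hd) h

lemma lowWt_mul {n a b c : ℕ} (hc : a + b ≤ c + 1)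
    {p q : MvPolynomial (Fin n × Fin n) ℝ} (hp : p ∈ lowWt n a) (hq : q ∈ lowWt n b) :
    p * q ∈ lowWt n c := by
  classical
  rw [lowWt, MvPolynomial.mem_restrictSupport_iff] at hp hq ⊢
  intro d hd
  obtain ⟨e, he, f, hf, rfl⟩ := Finset.mem_add.1 (MvPolynomial.support_mul p q hd)
  have h1 := hp he
  have h2 := hq hf
  simp only [Set.mem_ofPred_eq, map_add] at h1 h2 ⊢
  omega

lemma monomial_mem_lowWt {n D : ℕ} (d : Fin n × Fin n →₀ ℕ) (r : ℝ)
    (h : Finsupp.weight (fun ij : Fin n × Fin n => (ij.2 : ℕ)) d < D) :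
    MvPolynomial.monomial d r ∈ lowWt n D := by
  rw [lowWt, MvPolynomial.mem_restrictSupport_iff]
  intro e he
  have := MvPolynomial.support_monomial_subset he
  simp at this
  subst this
  exact h

lemma X_mem_lowWt {n D : ℕ} (i j : Fin n) (h : (j : ℕ) < D) :
    (MvPolynomial.X (i, j) : MvPolynomial (Fin n × Fin n) ℝ) ∈ lowWt n D := by
  apply monomial_mem_lowWt
  simpa [Finsupp.weight_single] using h

/-- Right translation by `h` on polynomials in the entries. -/
def rtr {n : ℕ} (h : Mat n ℝ) :
    MvPolynomial (Fin n × Fin n) ℝ →ₐ[ℝ] MvPolynomial (Fin n × Fin n) ℝ :=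
  MvPolynomial.aeval fun ij => ∑ k, h k ij.2 • MvPolynomial.X (ij.1, k)

lemma eval_rtr {n : ℕ} (h x : Mat n ℝ) (p : MvPolynomial (Fin n × Fin n) ℝ) :
    MvPolynomial.eval (matEval x) (rtr h p) = MvPolynomial.eval (matEval (x * h)) p := by
  induction p using MvPolynomial.induction_on with
  | C a => simp [rtr]
  | add p q hp hq => simp [hp, hq]
  | mul_X p ij hp =>
    rw [map_mul, map_mul, map_mul, hp]
    congr 1
    simp [rtr, matEval, Matrix.mul_apply, MvPolynomial.smul_eval, mul_comm]

lemma rtr_X_sub {n : ℕ} {h : Mat n ℝ} (hh : h ∈ UTset n) (i j : Fin n) :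
    rtr h (MvPolynomial.X (i, j)) - MvPolynomial.X (i, j) ∈ lowWt n j := by
  have : rtr h (MvPolynomial.X (i, j)) - MvPolynomial.X (i, j)
      = ∑ k ∈ Finset.univ.erase j,
        h k j • (MvPolynomial.X (i, k) : MvPolynomial (Fin n × Fin n) ℝ) := by
    rw [sub_eq_iff_eq_add, rtr, MvPolynomial.aeval_X,
      ← Finset.sum_erase_add _ _ (Finset.mem_univ j)]
    simp [hh.1 j]
  rw [this]
  refine Submodule.sum_mem _ fun k hk => ?_
  by_cases hkj : (k : ℕ) < j
  · exact Submodule.smul_mem _ _ (X_mem_lowWt i k hkj)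
  · have hne : k ≠ j := Finset.ne_of_mem_erase hk
    have : (j : ℕ) < k := by
      have : (k : ℕ) ≠ j := fun e => hne (Fin.ext e)
      omega
    rw [hh.2 k j this, zero_smul]
    exact Submodule.zero_mem _

lemma expo_induction {σ : Type} {P : (σ →₀ ℕ) → Prop} (h0 : P 0)
    (h1 : ∀ (i : σ) (d : σ →₀ ℕ), P d → P (d + Finsupp.single i 1)) (d : σ →₀ ℕ) : P d := by
  have key : ∀ e d : σ →₀ ℕ, P d → P (d + e) := by
    intro e
    induction e using Finsupp.induction_linear with
    | zero => intro d hd; simpa using hd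
    | add f g hf hg => intro d hd; rw [← add_assoc]; exact hg _ (hf _ hd)
    | single i m =>
      induction m with
      | zero => intro d hd; simpa using hd
      | succ m ih =>
        intro d hd
        rw [Finsupp.single_add, ← add_assoc]
        exact h1 _ _ (ih _ hd)
  simpa using key d 0 h0

lemma rtr_monomial_sub {n : ℕ} {h : Mat n ℝ} (hh : h ∈ UTset n)
    (d : Fin n × Fin n →₀ ℕ) (r : ℝ) :
    rtr h (MvPolynomial.monomial d r) - MvPolynomial.monomial d r
      ∈ lowWt n (Finsupp.weight (fun ij : Fin n × Fin n => (ij.2 : ℕ)) d) := by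
  induction d using expo_induction with
  | h0 =>
    have : rtr h (MvPolynomial.monomial 0 r) - MvPolynomial.monomial 0 r = 0 := by
      change rtr h (MvPolynomial.C r) - MvPolynomial.C r = 0
      simp [rtr]
    rw [this]
    exact Submodule.zero_mem _
  | h1 ij d ih =>
    obtain ⟨i, j⟩ := ij
    have e : MvPolynomial.monomial (d + Finsupp.single (i, j) 1) r
        = MvPolynomial.monomial d r * MvPolynomial.X (i, j) := by
      rw [MvPolynomial.X, MvPolynomial.monomial_mul, mul_one]
    have e2 : rtr h (MvPolynomial.monomial d r * MvPolynomial.X (i, j))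
          - MvPolynomial.monomial d r * MvPolynomial.X (i, j)
        = (rtr h (MvPolynomial.monomial d r) - MvPolynomial.monomial d r)
            * ((rtr h (MvPolynomial.X (i, j)) - MvPolynomial.X (i, j)) + MvPolynomial.X (i, j))
          + MvPolynomial.monomial d r
            * (rtr h (MvPolynomial.X (i, j)) - MvPolynomial.X (i, j)) := by
      rw [map_mul]; ring
    have hX := rtr_X_sub hh i j
    rw [e, e2, map_add]
    have w : Finsupp.weight (fun ij : Fin n × Fin n => (ij.2 : ℕ))
        (Finsupp.single (i, j) 1) = (j : ℕ) := by
      simp [Finsupp.weight_single]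
    rw [w]
    refine Submodule.add_mem _ ?_ ?_
    · refine lowWt_mul (b := (j : ℕ) + 1) (by omega) ih (Submodule.add_mem _ ?_ ?_)
      · exact lowWt_mono (Nat.le_succ _) hX
      · exact X_mem_lowWt i j (Nat.lt_succ_self _)
    · exact lowWt_mul (by omega) (monomial_mem_lowWt d r (Nat.lt_succ_self _)) hX

lemma rtr_sub {n D : ℕ} {h : Mat n ℝ} (hh : h ∈ UTset n)
    {p : MvPolynomial (Fin n × Fin n) ℝ} (hp : p ∈ lowWt n (D + 1)) :
    rtr h p - p ∈ lowWt n D := by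
  have e : rtr h p - p = ∑ d ∈ p.support, (rtr h (MvPolynomial.monomial d (p.coeff d))
      - MvPolynomial.monomial d (p.coeff d)) := by
    rw [Finset.sum_sub_distrib, ← map_sum, MvPolynomial.support_sum_monomial_coeff]
  rw [e]
  rw [lowWt, MvPolynomial.mem_restrictSupport_iff] at hp
  refine Submodule.sum_mem _ fun d hd => ?_
  have h1 : Finsupp.weight (fun ij : Fin n × Fin n => (ij.2 : ℕ)) d < D + 1 := hp hd
  exact lowWt_mono (by omega) (rtr_monomial_sub hh d _)

lemma lowWt_zero {n : ℕ} {p : MvPolynomial (Fin n × Fin n) ℝ} (hp : p ∈ lowWt n 0) : p = 0 := by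
  rw [lowWt, MvPolynomial.mem_restrictSupport_iff] at hp
  rw [← MvPolynomial.support_eq_empty, Finset.eq_empty_iff_forall_notMem]
  intro d hd
  exact absurd (hp hd) (Nat.not_lt_zero _)

/-- A polynomial bounded along the powers of a unipotent `g` is constant along them. -/
lemma const_of_bounded {n : ℕ} {g : Mat n ℝ} (hg : g ∈ UTset n) (D : ℕ) :
    ∀ p ∈ lowWt n D, (∃ C : ℝ, ∀ k : ℕ, |MvPolynomial.eval (matEval (g ^ k)) p| ≤ C) →
      ∀ k : ℕ, MvPolynomial.eval (matEval (g ^ k)) p = MvPolynomial.eval (matEval 1) p := by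
  induction D with
  | zero =>
    intro p hp _ k
    rw [lowWt_zero hp]; simp
  | succ D ih =>
    intro p hp ⟨C, hC⟩
    have hq : ∀ k : ℕ, MvPolynomial.eval (matEval (g ^ k)) (rtr g p - p)
        = MvPolynomial.eval (matEval (g ^ (k + 1))) p
          - MvPolynomial.eval (matEval (g ^ k)) p := by
      intro k
      rw [map_sub, eval_rtr, pow_succ]
    have hc := ih (rtr g p - p) (rtr_sub hg hp) ⟨C + C, fun k => by
      rw [hq]
      exact (abs_sub _ _).trans (add_le_add (hC _) (hC _))⟩
    set c := MvPolynomial.eval (matEval 1) (rtr g p - p) with hcdef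
    have hlin : ∀ k : ℕ, MvPolynomial.eval (matEval (g ^ k)) p
        = MvPolynomial.eval (matEval 1) p + k * c := by
      intro k
      induction k with
      | zero => simp
      | succ k ihk =>
        have h1 := hq k
        rw [hc k] at h1
        push_cast
        linarith
    have hc0 : c = 0 := by
      by_contra hne
      have hpos : 0 < |c| := abs_pos.2 hne
      obtain ⟨k, hk⟩ := exists_nat_gt ((C + C) / |c|)
      rw [div_lt_iff₀ hpos] at hk
      have h0 := hC 0
      have h1 := hC k
      rw [hlin] at h0 h1
      simp only [Nat.cast_zero, zero_mul, add_zero] at h0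
      have h2 : |(k : ℝ) * c| ≤ C + C := by
        have : (k : ℝ) * c = (MvPolynomial.eval (matEval 1) p + k * c)
            - MvPolynomial.eval (matEval 1) p := by ring
        rw [this]
        exact (abs_sub _ _).trans (add_le_add h1 h0)
      rw [abs_mul, Nat.abs_cast] at h2
      linarith
    intro k
    rw [hlin, hc0]; simp

/-- no proper real algebraic subgroup of `G` contains a lattice of `G`. -/
theorem stmt8 {n : ℕ} (G : Set (Mat n ℝ)) (hG : IsRealUnipotentGroup n G)
    (Γ : Set (Mat n ℝ)) (hΓ : IsLatticeIn n G Γ)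
    (H : Set (Mat n ℝ)) (hH : IsRealAlgSubgroup n G H) (hΓH : Γ ⊆ H) :
    H = G := by
  obtain ⟨hHG, ⟨S, hS⟩, h1H, hmulH, -⟩ := hH
  obtain ⟨⟨S', hS'⟩, h1G, hmulG, -⟩ := hG
  obtain ⟨-, -, -, -, -, K, hKG, hK, hcov⟩ := hΓ
  have hGU : ∀ g ∈ G, g ∈ UTset n := fun g hg => by
    rw [hS'] at hg
    exact hg.1
  have key : ∀ D : ℕ, ∀ p ∈ lowWt n D,
      (∀ h ∈ H, MvPolynomial.eval (matEval h) p = 0) →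
      ∀ g ∈ G, MvPolynomial.eval (matEval g) p = 0 := by
    intro D
    induction D with
    | zero =>
      intro p hp _ g _
      rw [lowWt_zero hp]; simp
    | succ D ih =>
      intro p hp hpH g hg
      have hinv : ∀ x ∈ G, ∀ h ∈ H,
          MvPolynomial.eval (matEval (x * h)) p = MvPolynomial.eval (matEval x) p := by
        intro x hx h hh
        have := ih (rtr h p - p) (rtr_sub (hGU h (hHG hh)) hp) (fun y hy => by
          rw [map_sub, eval_rtr, hpH _ (hmulH y hy h hh), hpH y hy, sub_zero]) x hx
        rw [map_sub, eval_rtr] at this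
        linarith
      have hcont : Continuous fun x : Mat n ℝ => MvPolynomial.eval (matEval x) p := by
        have : Continuous fun x : Mat n ℝ => matEval x :=
          continuous_pi fun ij => continuous_id.matrix_elem ij.1 ij.2
        exact (MvPolynomial.continuous_eval p).comp this
      obtain ⟨C, hC⟩ := hK.exists_bound_of_continuousOn hcont.continuousOn
      have hpow : ∀ k : ℕ, g ^ k ∈ G := by
        intro k
        induction k with
        | zero => simpa using h1G
        | succ k ihk => rw [pow_succ]; exact hmulG _ ihk _ hg
      have hb : ∀ k : ℕ, |MvPolynomial.eval (matEval (g ^ k)) p| ≤ C := by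
        intro k
        obtain ⟨x, hx, γ, hγ, e⟩ := hcov _ (hpow k)
        rw [e, hinv x (hKG hx) γ (hΓH hγ)]
        exact hC x hx
      have := const_of_bounded (hGU g hg) (D + 1) p hp ⟨C, hb⟩ 1
      rw [pow_one] at this
      rw [this, hpH 1 h1H]
  refine Set.Subset.antisymm hHG fun g hg => ?_
  rw [hS]
  refine ⟨hGU g hg, fun p hp => ?_⟩
  have hpD : p ∈ lowWt n (p.support.sup
      (Finsupp.weight (fun ij : Fin n × Fin n => (ij.2 : ℕ))) + 1) := by
    rw [lowWt, MvPolynomial.mem_restrictSupport_iff]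
    intro d hd
    exact Nat.lt_succ_of_le (Finset.le_sup (f := ⇑(Finsupp.weight
      (fun ij : Fin n × Fin n => (ij.2 : ℕ)))) hd)
  refine key _ p hpD (fun h hh => ?_) g hg
  rw [hS] at hh
  exact hh.2 p hp
end
end
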